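/- Suppose there exist a symmetric positive definite n×n matrix Y and constants α, β_ω, β_v, β_e, β_r ≥ 0 such that −𝓜̃ − α 𝓝̃ − β_ω S_ω − β_v S_v − β_e S_e − β_r S_r is positive semidefinite, where 𝓜̃ is the symmetric block matrix with (1,1) block Y Aᵀ + A Y, (2,1) block Gᵀ, (3,1) block B_vᵀ, (4,1) block B_eᵀ, (5,1) block B_rᵀ, all other blocks zero; 𝓝̃ = diag(Y, 0, 0, 0, 0, −1); S_ω = diag(0, −W_ω, 0, 0, 0, 1); S_v = diag(0, 0, −W_v, 0, 0, 1); S_e = diag(0, 0, 0, −P̄_e, 0, 1); S_r = diag(0, 0, 0, 0, −Π, 1). Then, with P = Y⁻¹, every differentiable trajectory ζ of the closed-loop system under admissible disturbances satisfies ζ(t)ᵀ P ζ(t) ≤ max{ζ(0)ᵀ P ζ(0), 1} for all t ≥ 0; in particular every trajectory is bounded. -/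

import Mathlib

open Matrix MeasureTheory Filter

/-- Index type for the stacked vector κ = (ζ, ω, v, ē, r, 1). -/
abbrev Idx (n p q m s : ℕ) := Fin n ⊕ Fin p ⊕ Fin q ⊕ Fin m ⊕ Fin s ⊕ Fin 1

noncomputable section

variable {n p q m s : ℕ}

/-- The stacked vector κ = (ζ, ω, v, ē, r, 1). -/
def stack (z : Fin n → ℝ) (w : Fin p → ℝ) (v : Fin q → ℝ) (e : Fin m → ℝ)
    (r : Fin s → ℝ) : Idx n p q m s → ℝ :=
  Sum.elim z (Sum.elim w (Sum.elim v (Sum.elim e (Sum.elim r (fun _ => 1)))))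

/-- The symmetric block matrix 𝓜 with (1,1) block Aᵀ P + P A and
(2,1),(3,1),(4,1),(5,1) blocks GᵀP, Bvᵀ P, Beᵀ P, Brᵀ P, all other blocks zero. -/
def bigM (P A : Matrix (Fin n) (Fin n) ℝ) (G : Matrix (Fin n) (Fin p) ℝ)
    (Bv : Matrix (Fin n) (Fin q) ℝ) (Be : Matrix (Fin n) (Fin m) ℝ)
    (Br : Matrix (Fin n) (Fin s) ℝ) : Matrix (Idx n p q m s) (Idx n p q m s) ℝ :=
  Matrix.of fun i j => match i, j with
  | Sum.inl i, Sum.inl j => (Aᵀ * P + P * A) i j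
  | Sum.inl i, Sum.inr (Sum.inl j) => (P * G) i j
  | Sum.inr (Sum.inl i), Sum.inl j => (Gᵀ * P) i j
  | Sum.inl i, Sum.inr (Sum.inr (Sum.inl j)) => (P * Bv) i j
  | Sum.inr (Sum.inr (Sum.inl i)), Sum.inl j => (Bvᵀ * P) i j
  | Sum.inl i, Sum.inr (Sum.inr (Sum.inr (Sum.inl j))) => (P * Be) i j
  | Sum.inr (Sum.inr (Sum.inr (Sum.inl i))), Sum.inl j => (Beᵀ * P) i j
  | Sum.inl i, Sum.inr (Sum.inr (Sum.inr (Sum.inr (Sum.inl j)))) => (P * Br) i j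
  | Sum.inr (Sum.inr (Sum.inr (Sum.inr (Sum.inl i)))), Sum.inl j => (Brᵀ * P) i j
  | _, _ => 0

/-- The congruence-transformed block matrix 𝓜̃ with (1,1) block Y Aᵀ + A Y and
(2,1),(3,1),(4,1),(5,1) blocks Gᵀ, Bvᵀ, Beᵀ, Brᵀ, all other blocks zero. -/
def bigMt (Y A : Matrix (Fin n) (Fin n) ℝ) (G : Matrix (Fin n) (Fin p) ℝ)
    (Bv : Matrix (Fin n) (Fin q) ℝ) (Be : Matrix (Fin n) (Fin m) ℝ)
    (Br : Matrix (Fin n) (Fin s) ℝ) : Matrix (Idx n p q m s) (Idx n p q m s) ℝ :=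
  Matrix.of fun i j => match i, j with
  | Sum.inl i, Sum.inl j => (Y * Aᵀ + A * Y) i j
  | Sum.inl i, Sum.inr (Sum.inl j) => G i j
  | Sum.inr (Sum.inl i), Sum.inl j => Gᵀ i j
  | Sum.inl i, Sum.inr (Sum.inr (Sum.inl j)) => Bv i j
  | Sum.inr (Sum.inr (Sum.inl i)), Sum.inl j => Bvᵀ i j
  | Sum.inl i, Sum.inr (Sum.inr (Sum.inr (Sum.inl j))) => Be i j
  | Sum.inr (Sum.inr (Sum.inr (Sum.inl i))), Sum.inl j => Beᵀ i j
  | Sum.inl i, Sum.inr (Sum.inr (Sum.inr (Sum.inr (Sum.inl j)))) => Br i j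
  | Sum.inr (Sum.inr (Sum.inr (Sum.inr (Sum.inl i)))), Sum.inl j => Brᵀ i j
  | _, _ => 0

/-- 𝓝 = diag(P, 0, 0, 0, 0, −1). -/
def bigN (P : Matrix (Fin n) (Fin n) ℝ) : Matrix (Idx n p q m s) (Idx n p q m s) ℝ :=
  Matrix.of fun i j => match i, j with
  | Sum.inl i, Sum.inl j => P i j
  | Sum.inr (Sum.inr (Sum.inr (Sum.inr (Sum.inr _)))),
    Sum.inr (Sum.inr (Sum.inr (Sum.inr (Sum.inr _)))) => -1
  | _, _ => 0

/-- S_ω = diag(0, −W_ω, 0, 0, 0, 1). -/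
def Sw (W : Matrix (Fin p) (Fin p) ℝ) : Matrix (Idx n p q m s) (Idx n p q m s) ℝ :=
  Matrix.of fun i j => match i, j with
  | Sum.inr (Sum.inl i), Sum.inr (Sum.inl j) => -W i j
  | Sum.inr (Sum.inr (Sum.inr (Sum.inr (Sum.inr _)))),
    Sum.inr (Sum.inr (Sum.inr (Sum.inr (Sum.inr _)))) => 1
  | _, _ => 0

/-- S_v = diag(0, 0, −W_v, 0, 0, 1). -/
def Sv (W : Matrix (Fin q) (Fin q) ℝ) : Matrix (Idx n p q m s) (Idx n p q m s) ℝ :=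
  Matrix.of fun i j => match i, j with
  | Sum.inr (Sum.inr (Sum.inl i)), Sum.inr (Sum.inr (Sum.inl j)) => -W i j
  | Sum.inr (Sum.inr (Sum.inr (Sum.inr (Sum.inr _)))),
    Sum.inr (Sum.inr (Sum.inr (Sum.inr (Sum.inr _)))) => 1
  | _, _ => 0

/-- S_e = diag(0, 0, 0, −P̄_e, 0, 1). -/
def Se (W : Matrix (Fin m) (Fin m) ℝ) : Matrix (Idx n p q m s) (Idx n p q m s) ℝ :=
  Matrix.of fun i j => match i, j with
  | Sum.inr (Sum.inr (Sum.inr (Sum.inl i))),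
    Sum.inr (Sum.inr (Sum.inr (Sum.inl j))) => -W i j
  | Sum.inr (Sum.inr (Sum.inr (Sum.inr (Sum.inr _)))),
    Sum.inr (Sum.inr (Sum.inr (Sum.inr (Sum.inr _)))) => 1
  | _, _ => 0

/-- S_r = diag(0, 0, 0, 0, −Π, 1). -/
def Sr (W : Matrix (Fin s) (Fin s) ℝ) : Matrix (Idx n p q m s) (Idx n p q m s) ℝ :=
  Matrix.of fun i j => match i, j with
  | Sum.inr (Sum.inr (Sum.inr (Sum.inr (Sum.inl i)))),
    Sum.inr (Sum.inr (Sum.inr (Sum.inr (Sum.inl j)))) => -W i j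
  | Sum.inr (Sum.inr (Sum.inr (Sum.inr (Sum.inr _)))),
    Sum.inr (Sum.inr (Sum.inr (Sum.inr (Sum.inr _)))) => 1
  | _, _ => 0

end

section helpers

variable {n p q m s : ℕ}

lemma q_bigN (Y : Matrix (Fin n) (Fin n) ℝ) (z : Fin n → ℝ) (w : Fin p → ℝ) (v : Fin q → ℝ)
    (e : Fin m → ℝ) (r : Fin s → ℝ) :
    stack z w v e r ⬝ᵥ bigN Y *ᵥ stack z w v e r = z ⬝ᵥ Y *ᵥ z - 1 := by
  simp [dotProduct, mulVec, Fintype.sum_sum_type, stack, bigN, sub_eq_add_neg]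

lemma q_Sw (W : Matrix (Fin p) (Fin p) ℝ) (z : Fin n → ℝ) (w : Fin p → ℝ) (v : Fin q → ℝ)
    (e : Fin m → ℝ) (r : Fin s → ℝ) :
    stack z w v e r ⬝ᵥ Sw W *ᵥ stack z w v e r = 1 - w ⬝ᵥ W *ᵥ w := by
  simp [dotProduct, mulVec, Fintype.sum_sum_type, stack, Sw]
  ring

lemma q_Sv (W : Matrix (Fin q) (Fin q) ℝ) (z : Fin n → ℝ) (w : Fin p → ℝ) (v : Fin q → ℝ)
    (e : Fin m → ℝ) (r : Fin s → ℝ) :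
    stack z w v e r ⬝ᵥ Sv W *ᵥ stack z w v e r = 1 - v ⬝ᵥ W *ᵥ v := by
  simp [dotProduct, mulVec, Fintype.sum_sum_type, stack, Sv]
  ring

lemma q_Se (W : Matrix (Fin m) (Fin m) ℝ) (z : Fin n → ℝ) (w : Fin p → ℝ) (v : Fin q → ℝ)
    (e : Fin m → ℝ) (r : Fin s → ℝ) :
    stack z w v e r ⬝ᵥ Se W *ᵥ stack z w v e r = 1 - e ⬝ᵥ W *ᵥ e := by
  simp [dotProduct, mulVec, Fintype.sum_sum_type, stack, Se]
  ring

lemma q_Sr (W : Matrix (Fin s) (Fin s) ℝ) (z : Fin n → ℝ) (w : Fin p → ℝ) (v : Fin q → ℝ)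
    (e : Fin m → ℝ) (r : Fin s → ℝ) :
    stack z w v e r ⬝ᵥ Sr W *ᵥ stack z w v e r = 1 - r ⬝ᵥ W *ᵥ r := by
  simp [dotProduct, mulVec, Fintype.sum_sum_type, stack, Sr]
  ring

lemma dot_transpose {a b : ℕ} (M : Matrix (Fin a) (Fin b) ℝ) (x : Fin b → ℝ) (y : Fin a → ℝ) :
    x ⬝ᵥ Mᵀ *ᵥ y = y ⬝ᵥ M *ᵥ x := by
  rw [mulVec_transpose, dotProduct_comm, dotProduct_mulVec]

lemma q_bigMt (Y A : Matrix (Fin n) (Fin n) ℝ) (G : Matrix (Fin n) (Fin p) ℝ)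
    (Bv : Matrix (Fin n) (Fin q) ℝ) (Be : Matrix (Fin n) (Fin m) ℝ)
    (Br : Matrix (Fin n) (Fin s) ℝ) (hY : Yᵀ = Y)
    (z : Fin n → ℝ) (w : Fin p → ℝ) (v : Fin q → ℝ)
    (e : Fin m → ℝ) (r : Fin s → ℝ) :
    stack z w v e r ⬝ᵥ bigMt Y A G Bv Be Br *ᵥ stack z w v e r =
      2 * (z ⬝ᵥ (A *ᵥ (Y *ᵥ z) + G *ᵥ w + Bv *ᵥ v + Be *ᵥ e + Br *ᵥ r)) := by
  have h : stack z w v e r ⬝ᵥ bigMt Y A G Bv Be Br *ᵥ stack z w v e r =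
      z ⬝ᵥ (Y * Aᵀ + A * Y) *ᵥ z + z ⬝ᵥ G *ᵥ w + z ⬝ᵥ Bv *ᵥ v + z ⬝ᵥ Be *ᵥ e + z ⬝ᵥ Br *ᵥ r
      + (w ⬝ᵥ Gᵀ *ᵥ z + v ⬝ᵥ Bvᵀ *ᵥ z + e ⬝ᵥ Beᵀ *ᵥ z + r ⬝ᵥ Brᵀ *ᵥ z) := by
    simp only [dotProduct, mulVec, Fintype.sum_sum_type, stack, bigMt, Sum.elim_inl,
      Sum.elim_inr, of_apply, zero_mul, mul_zero, Finset.sum_const_zero, add_zero,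
      mul_add, Finset.sum_add_distrib]
    ring
  have h2 : z ⬝ᵥ (Y * Aᵀ) *ᵥ z = z ⬝ᵥ (A * Y) *ᵥ z := by
    rw [← dot_transpose (A * Y), transpose_mul, hY]
  rw [h]
  simp only [dot_transpose, add_mulVec, dotProduct_add, h2, mulVec_mulVec]
  ring

end helpers

/-- **boundedness of admissible trajectories.** If Y ≻ 0 and the linearized
LMI is feasible, then with P = Y⁻¹ every admissible trajectory of the closed-loop system
satisfies ζ(t)ᵀ P ζ(t) ≤ max{ζ(0)ᵀ P ζ(0), 1} for all t ≥ 0. -/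
theorem stmt9 {n p q m s : ℕ}
    (A : Matrix (Fin n) (Fin n) ℝ)
    (G : Matrix (Fin n) (Fin p) ℝ) (Bv : Matrix (Fin n) (Fin q) ℝ)
    (Be : Matrix (Fin n) (Fin m) ℝ) (Br : Matrix (Fin n) (Fin s) ℝ)
    (Wω : Matrix (Fin p) (Fin p) ℝ) (hWω : Wω.PosDef)
    (Wv : Matrix (Fin q) (Fin q) ℝ) (hWv : Wv.PosDef)
    (Pe : Matrix (Fin m) (Fin m) ℝ) (hPe : Pe.PosDef)
    (Pim : Matrix (Fin s) (Fin s) ℝ) (hPim : Pim.PosDef)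
    (Y : Matrix (Fin n) (Fin n) ℝ) (hY : Y.PosDef)
    (α βω βv βe βr : ℝ) (hα : 0 ≤ α) (hβω : 0 ≤ βω) (hβv : 0 ≤ βv)
    (hβe : 0 ≤ βe) (hβr : 0 ≤ βr)
    (hLMI : (-(bigMt Y A G Bv Be Br) - α • bigN Y - βω • Sw Wω - βv • Sv Wv
              - βe • Se Pe - βr • Sr Pim).PosSemidef)
    (ζ : ℝ → Fin n → ℝ) (ω : ℝ → Fin p → ℝ) (v : ℝ → Fin q → ℝ)
    (e : ℝ → Fin m → ℝ) (r : ℝ → Fin s → ℝ)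
    (hdyn : ∀ t ∈ Set.Ici (0:ℝ), HasDerivAt ζ
      (A *ᵥ ζ t + G *ᵥ ω t + Bv *ᵥ v t + Be *ᵥ e t + Br *ᵥ r t) t)
    (hω : ∀ t ∈ Set.Ici (0:ℝ), ω t ⬝ᵥ Wω *ᵥ ω t ≤ 1)
    (hv : ∀ t ∈ Set.Ici (0:ℝ), v t ⬝ᵥ Wv *ᵥ v t ≤ 1)
    (he : ∀ t ∈ Set.Ici (0:ℝ), e t ⬝ᵥ Pe *ᵥ e t ≤ 1)
    (hr : ∀ t ∈ Set.Ici (0:ℝ), r t ⬝ᵥ Pim *ᵥ r t ≤ 1) :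
    ∀ t ∈ Set.Ici (0:ℝ), ζ t ⬝ᵥ Y⁻¹ *ᵥ ζ t ≤ max (ζ 0 ⬝ᵥ Y⁻¹ *ᵥ ζ 0) 1 := by
  have hYt : Yᵀ = Y := by simpa using hY.isHermitian.eq
  have hdet : IsUnit Y.det := (Matrix.isUnit_iff_isUnit_det _).1 hY.isUnit
  have hPt : (Y⁻¹)ᵀ = Y⁻¹ := by rw [transpose_nonsing_inv, hYt]
  set V : ℝ → ℝ := fun t => ζ t ⬝ᵥ Y⁻¹ *ᵥ ζ t with hV
  set D : ℝ → Fin n → ℝ := fun t =>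
    A *ᵥ ζ t + G *ᵥ ω t + Bv *ᵥ v t + Be *ᵥ e t + Br *ᵥ r t with hD
  have hVd : ∀ t ∈ Set.Ici (0:ℝ), HasDerivAt V (2 * ((Y⁻¹ *ᵥ ζ t) ⬝ᵥ D t)) t := by
    intro t ht
    have h1 := hasDerivAt_pi.1 (hdyn t ht)
    have h2 : ∀ i, HasDerivAt (fun t => (Y⁻¹ *ᵥ ζ t) i) ((Y⁻¹ *ᵥ D t) i) t := by
      intro i
      simp only [mulVec, dotProduct]
      exact HasDerivAt.fun_sum fun j _ => (h1 j).const_mul (Y⁻¹ i j)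
    have h3 : HasDerivAt V (∑ i, (D t i * (Y⁻¹ *ᵥ ζ t) i + ζ t i * (Y⁻¹ *ᵥ D t) i)) t :=
      HasDerivAt.fun_sum fun i _ => (h1 i).mul (h2 i)
    convert h3 using 1
    rw [Finset.sum_add_distrib]
    change _ = D t ⬝ᵥ (Y⁻¹ *ᵥ ζ t) + ζ t ⬝ᵥ Y⁻¹ *ᵥ D t
    have h4 := dot_transpose Y⁻¹ (ζ t) (D t)
    rw [hPt] at h4
    rw [h4, dotProduct_comm (Y⁻¹ *ᵥ ζ t)]
    ring
  have hVle : ∀ t ∈ Set.Ici (0:ℝ), 2 * ((Y⁻¹ *ᵥ ζ t) ⬝ᵥ D t) + α * (V t - 1) ≤ 0 := by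
    intro t ht
    have h := hLMI.dotProduct_mulVec_nonneg (stack (Y⁻¹ *ᵥ ζ t) (ω t) (v t) (e t) (r t))
    have hYP : Y *ᵥ (Y⁻¹ *ᵥ ζ t) = ζ t := by
      rw [mulVec_mulVec, mul_nonsing_inv _ hdet, one_mulVec]
    simp only [star_trivial, sub_mulVec, neg_mulVec, smul_mulVec, dotProduct_sub,
      dotProduct_neg, dotProduct_smul, q_bigN, q_Sw, q_Sv, q_Se, q_Sr,
      q_bigMt _ _ _ _ _ _ hYt, smul_eq_mul, hYP] at h
    rw [dotProduct_comm _ (ζ t)] at h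
    have a1 := mul_nonneg hβω (sub_nonneg.2 (hω t ht))
    have a2 := mul_nonneg hβv (sub_nonneg.2 (hv t ht))
    have a3 := mul_nonneg hβe (sub_nonneg.2 (he t ht))
    have a4 := mul_nonneg hβr (sub_nonneg.2 (hr t ht))
    simp only [hV, hD]
    linarith
  have hfd : ∀ t ∈ Set.Ici (0:ℝ), HasDerivAt (fun t => (V t - 1) * Real.exp (α * t))
      ((2 * ((Y⁻¹ *ᵥ ζ t) ⬝ᵥ D t) + α * (V t - 1)) * Real.exp (α * t)) t := by
    intro t ht
    have h1 := ((hVd t ht).sub_const 1).mul (((hasDerivAt_id t).const_mul α).exp)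
    refine h1.congr_deriv ?_
    simp only [id, mul_one]
    ring
  have hanti : AntitoneOn (fun t => (V t - 1) * Real.exp (α * t)) (Set.Ici (0:ℝ)) := by
    apply antitoneOn_of_deriv_nonpos (convex_Ici 0)
    · exact fun t ht => (hfd t ht).continuousAt.continuousWithinAt
    · exact fun t ht => (hfd t (interior_subset ht)).differentiableAt.differentiableWithinAt
    · intro t ht
      rw [(hfd t (interior_subset ht)).deriv]
      exact mul_nonpos_of_nonpos_of_nonneg (hVle t (interior_subset ht)) (Real.exp_pos _).le
  intro t ht
  have h := hanti (Set.mem_Ici.2 le_rfl) ht ht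
  simp only [mul_zero, Real.exp_zero, mul_one] at h
  change V t ≤ max (V 0) 1
  by_contra! hc
  have hc1 := (le_max_left _ _).trans_lt hc
  have hc2 := (le_max_right _ _).trans_lt hc
  have hexp : 1 ≤ Real.exp (α * t) := Real.one_le_exp (mul_nonneg hα ht)
  nlinarith
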